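/- arXiv:2309.16610 — 2 statements merged into one kernel-verified Lean document; each statement's English description precedes it below -/
import Mathlib

section
/- For all A, B, C ∈ 𝔪': g'(Λ'(A)B, C) + g'(B, Λ'(A)C) = 0; that is, each endomorphism Λ'(A) of 𝔪' is skew-symmetric with respect to g'. -/
noncomputable section

/- Context: *extended symmetric data* consists of a finite-dimensional real
semisimple Lie algebra `𝔤` with a `ℤ₂`-grading `𝔤 = 𝔤₀ ⊕ 𝔤₁`, a decomposition
`𝔤₀ = 𝔥 ⊕ 𝔨` into commuting Lie subalgebras, and nonzero reals `λ₀, λ₁` such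
that `g := λ₀ κ|𝔨 ⊥ λ₁ κ|𝔤₁` is positive definite on `𝔪 := 𝔨 ⊕ 𝔤₁` (`κ` the
Killing form).  `proj_𝔪` is the projection `𝔤 = 𝔥 ⊕ 𝔪 → 𝔪` along `𝔥`, `U` is
the symmetric bilinear map determined by
`2g(U(X,Y),Z) = g(proj_𝔪[Z,X],Y) + g(X,proj_𝔪[Z,Y])`, and the Nomizu map is
`Λ(X)Y = ½ proj_𝔪[X,Y] + U(X,Y)`. -/

/-- Extended symmetric data on a real Lie algebra `L` (semisimplicity and finite
dimensionality are imposed as typeclass assumptions in the theorems). -/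
structure ExtSymData (L : Type*) [LieRing L] [LieAlgebra ℝ L] where
  /-- the subalgebra `𝔥` -/
  H : Submodule ℝ L
  /-- the subalgebra `𝔨` -/
  K : Submodule ℝ L
  /-- the odd part `𝔤₁` of the grading -/
  G1 : Submodule ℝ L
  lam0 : ℝ
  lam1 : ℝ
  lam0_ne : lam0 ≠ 0
  lam1_ne : lam1 ≠ 0
  /-- `𝔥 ⊕ 𝔨` is a direct sum -/
  hHK_inf : H ⊓ K = ⊥
  /-- `𝔤₀ ⊕ 𝔤₁` is a direct sum -/
  hG0_inf : (H ⊔ K) ⊓ G1 = ⊥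
  /-- `𝔤 = 𝔥 ⊕ 𝔨 ⊕ 𝔤₁` -/
  h_top : H ⊔ K ⊔ G1 = ⊤
  /-- `𝔥` is a Lie subalgebra -/
  hH_sub : ∀ a ∈ H, ∀ b ∈ H, ⁅a, b⁆ ∈ H
  /-- `𝔨` is a Lie subalgebra -/
  hK_sub : ∀ a ∈ K, ∀ b ∈ K, ⁅a, b⁆ ∈ K
  /-- `[𝔥, 𝔨] = 0` -/
  hHK_comm : ∀ a ∈ H, ∀ b ∈ K, ⁅a, b⁆ = (0 : L)
  /-- `[𝔤₀, 𝔤₁] ⊆ 𝔤₁` -/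
  hG0G1 : ∀ a ∈ H ⊔ K, ∀ b ∈ G1, ⁅a, b⁆ ∈ G1
  /-- `[𝔤₁, 𝔤₁] ⊆ 𝔤₀` -/
  hG1G1 : ∀ a ∈ G1, ∀ b ∈ G1, ⁅a, b⁆ ∈ H ⊔ K
  /-- the metric `g` -/
  gform : L →ₗ[ℝ] L →ₗ[ℝ] ℝ
  gform_K : ∀ x ∈ K, ∀ x' ∈ K, gform x x' = lam0 * killingForm ℝ L x x'
  gform_G1 : ∀ y ∈ G1, ∀ y' ∈ G1, gform y y' = lam1 * killingForm ℝ L y y'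
  gform_KG1 : ∀ x ∈ K, ∀ y ∈ G1, gform x y = 0
  gform_G1K : ∀ x ∈ K, ∀ y ∈ G1, gform y x = 0
  /-- `g` is positive definite on `𝔪 = 𝔨 ⊕ 𝔤₁` -/
  gform_posdef : ∀ v ∈ K ⊔ G1, v ≠ 0 → 0 < gform v v
  /-- the projection `proj_𝔪 : 𝔤 = 𝔥 ⊕ 𝔪 → 𝔪` along `𝔥` -/
  projm : L →ₗ[ℝ] L
  projm_H : ∀ h ∈ H, projm h = 0
  projm_m : ∀ m ∈ K ⊔ G1, projm m = m
  /-- the symmetric bilinear map `U` -/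
  Ubil : L →ₗ[ℝ] L →ₗ[ℝ] L
  Ubil_symm : ∀ X Y : L, Ubil X Y = Ubil Y X
  Ubil_mem : ∀ X ∈ K ⊔ G1, ∀ Y ∈ K ⊔ G1, Ubil X Y ∈ K ⊔ G1
  Ubil_def : ∀ X ∈ K ⊔ G1, ∀ Y ∈ K ⊔ G1, ∀ Z ∈ K ⊔ G1,
    2 * gform (Ubil X Y) Z = gform (projm ⁅Z, X⁆) Y + gform X (projm ⁅Z, Y⁆)

variable {L : Type*} [LieRing L] [LieAlgebra ℝ L]

/-- The Nomizu map `Λ(X)Y = ½ proj_𝔪 ⁅X,Y⁆ + U(X,Y)` of the Levi-Civita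
connection. -/
def nomizu (D : ExtSymData L) (X Y : L) : L :=
  (2⁻¹ : ℝ) • D.projm ⁅X, Y⁆ + D.Ubil X Y

open scoped TensorProduct

/-- The embedding `v ↦ 1 ⊗ v` of `𝔤` into `𝔤^ℂ = ℂ ⊗[ℝ] 𝔤`. -/
def iota1 {L : Type*} [LieRing L] [LieAlgebra ℝ L] : L →ₗ[ℝ] ℂ ⊗[ℝ] L :=
  TensorProduct.mk ℝ ℂ L 1

/-- The map `v ↦ i ⊗ v` of `𝔤` into `𝔤^ℂ = ℂ ⊗[ℝ] 𝔤`. -/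
def iotaI {L : Type*} [LieRing L] [LieAlgebra ℝ L] : L →ₗ[ℝ] ℂ ⊗[ℝ] L :=
  TensorProduct.mk ℝ ℂ L Complex.I

/-- The value `Λ'(x + iy)(x' + iy')` of the dual Nomizu map, written out in
components:
`Λ'(x+iy)(x'+iy') = 1 ⊗ (Λ(x)x' - Λ(y)y') + i ⊗ (2[x,y'] - Λ(x)y' - Λ(y)x')`,
which is exactly the piecewise definition
`Λ'(x)x' = Λ(x)x'`, `Λ'(x)(iy') = i(2[x,y'] - Λ(x)y')`,
`Λ'(iy)x' = -i Λ(y)x'`, `Λ'(iy)(iy') = -Λ(y)y'`. -/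
def nomizuDual (D : ExtSymData L) (x y x' y' : L) : ℂ ⊗[ℝ] L :=
  iota1 (nomizu D x x' - nomizu D y y')
    + iotaI ((2 : ℝ) • ⁅x, y'⁆ - nomizu D x y' - nomizu D y x')

namespace ExtSymData

theorem memK (D : ExtSymData L) {x : L} (h : x ∈ D.K) : x ∈ D.K ⊔ D.G1 :=
  Submodule.mem_sup_left h

theorem memG (D : ExtSymData L) {x : L} (h : x ∈ D.G1) : x ∈ D.K ⊔ D.G1 :=
  Submodule.mem_sup_right h

theorem g_symm (D : ExtSymData L) {a b : L} (ha : a ∈ D.K ⊔ D.G1) (hb : b ∈ D.K ⊔ D.G1) :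
    D.gform a b = D.gform b a := by
  obtain ⟨x, hx, y, hy, rfl⟩ := Submodule.mem_sup.1 ha
  obtain ⟨x', hx', y', hy', rfl⟩ := Submodule.mem_sup.1 hb
  simp only [map_add, LinearMap.add_apply]
  rw [D.gform_K x hx x' hx', D.gform_K x' hx' x hx, D.gform_G1 y hy y' hy',
    D.gform_G1 y' hy' y hy, D.gform_KG1 x hx y' hy', D.gform_KG1 x' hx' y hy,
    D.gform_G1K x hx y' hy', D.gform_G1K x' hx' y hy,
    show killingForm ℝ L x x' = killingForm ℝ L x' x from LieModule.traceForm_comm ℝ L L x x',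
    show killingForm ℝ L y y' = killingForm ℝ L y' y from LieModule.traceForm_comm ℝ L L y y']

theorem projm_mem (D : ExtSymData L) (v : L) : D.projm v ∈ D.K ⊔ D.G1 := by
  have hv : v ∈ D.H ⊔ D.K ⊔ D.G1 := by rw [D.h_top]; trivial
  rw [sup_assoc] at hv
  obtain ⟨h, hh, m, hm, rfl⟩ := Submodule.mem_sup.1 hv
  rw [map_add, D.projm_H h hh, D.projm_m m hm, zero_add]
  exact hm

theorem projm_even (D : ExtSymData L) {v : L} (hv : v ∈ D.H ⊔ D.K) : D.projm v ∈ D.K := by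
  obtain ⟨h, hh, m, hm, rfl⟩ := Submodule.mem_sup.1 hv
  rw [map_add, D.projm_H h hh, D.projm_m m (D.memK hm), zero_add]
  exact hm

theorem brKK (D : ExtSymData L) {x y : L} (hx : x ∈ D.K) (hy : y ∈ D.K) :
    D.projm ⁅x, y⁆ ∈ D.K :=
  D.projm_even (Submodule.mem_sup_right (D.hK_sub x hx y hy))

theorem brGG (D : ExtSymData L) {x y : L} (hx : x ∈ D.G1) (hy : y ∈ D.G1) :
    D.projm ⁅x, y⁆ ∈ D.K :=
  D.projm_even (D.hG1G1 x hx y hy)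

theorem lieKG (D : ExtSymData L) {x y : L} (hx : x ∈ D.K) (hy : y ∈ D.G1) :
    ⁅x, y⁆ ∈ D.G1 := D.hG0G1 x (Submodule.mem_sup_right hx) y hy

theorem brKG (D : ExtSymData L) {x y : L} (hx : x ∈ D.K) (hy : y ∈ D.G1) :
    D.projm ⁅x, y⁆ ∈ D.G1 := by
  rw [D.projm_m _ (D.memG (D.lieKG hx hy))]
  exact D.lieKG hx hy

theorem brGK (D : ExtSymData L) {x y : L} (hx : x ∈ D.G1) (hy : y ∈ D.K) :
    D.projm ⁅x, y⁆ ∈ D.G1 := by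
  rw [← lie_skew, map_neg]
  exact D.G1.neg_mem (D.brKG hy hx)

theorem memK_of_orth (D : ExtSymData L) {v : L} (hv : v ∈ D.K ⊔ D.G1)
    (h : ∀ z ∈ D.G1, 2 * D.gform v z = 0) : v ∈ D.K := by
  obtain ⟨x, hx, y, hy, rfl⟩ := Submodule.mem_sup.1 hv
  have h1 := h y hy
  rw [map_add, LinearMap.add_apply, D.gform_KG1 x hx y hy] at h1
  have : y = 0 := by
    by_contra hne
    have := D.gform_posdef y (D.memG hy) hne
    linarith
  simpa [this] using hx

theorem memG_of_orth (D : ExtSymData L) {v : L} (hv : v ∈ D.K ⊔ D.G1)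
    (h : ∀ z ∈ D.K, 2 * D.gform v z = 0) : v ∈ D.G1 := by
  obtain ⟨x, hx, y, hy, rfl⟩ := Submodule.mem_sup.1 hv
  have h1 := h x hx
  rw [map_add, LinearMap.add_apply, D.gform_G1K x hx y hy] at h1
  have : x = 0 := by
    by_contra hne
    have := D.gform_posdef x (D.memK hx) hne
    linarith
  simpa [this] using hy

theorem nomKK (D : ExtSymData L) {x y : L} (hx : x ∈ D.K) (hy : y ∈ D.K) :
    nomizu D x y ∈ D.K := by
  refine D.K.add_mem (D.K.smul_mem _ (D.brKK hx hy)) ?_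
  refine D.memK_of_orth (D.Ubil_mem _ (D.memK hx) _ (D.memK hy)) fun z hz => ?_
  rw [D.Ubil_def _ (D.memK hx) _ (D.memK hy) _ (D.memG hz),
    D.gform_G1K _ hy _ (D.brGK hz hx), D.gform_KG1 _ hx _ (D.brGK hz hy), add_zero]

theorem nomGG (D : ExtSymData L) {x y : L} (hx : x ∈ D.G1) (hy : y ∈ D.G1) :
    nomizu D x y ∈ D.K := by
  refine D.K.add_mem (D.K.smul_mem _ (D.brGG hx hy)) ?_
  refine D.memK_of_orth (D.Ubil_mem _ (D.memG hx) _ (D.memG hy)) fun z hz => ?_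
  rw [D.Ubil_def _ (D.memG hx) _ (D.memG hy) _ (D.memG hz),
    D.gform_KG1 _ (D.brGG hz hx) _ hy, D.gform_G1K _ (D.brGG hz hy) _ hx, add_zero]

theorem U_KG (D : ExtSymData L) {x y : L} (hx : x ∈ D.K) (hy : y ∈ D.G1) :
    D.Ubil x y ∈ D.G1 := by
  refine D.memG_of_orth (D.Ubil_mem _ (D.memK hx) _ (D.memG hy)) fun z hz => ?_
  rw [D.Ubil_def _ (D.memK hx) _ (D.memG hy) _ (D.memK hz),
    D.gform_KG1 _ (D.brKK hz hx) _ hy, D.gform_KG1 _ hx _ (D.brKG hz hy), add_zero]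

theorem nomKG (D : ExtSymData L) {x y : L} (hx : x ∈ D.K) (hy : y ∈ D.G1) :
    nomizu D x y ∈ D.G1 :=
  D.G1.add_mem (D.G1.smul_mem _ (D.brKG hx hy)) (D.U_KG hx hy)

theorem nomGK (D : ExtSymData L) {x y : L} (hx : x ∈ D.G1) (hy : y ∈ D.K) :
    nomizu D x y ∈ D.G1 := by
  refine D.G1.add_mem (D.G1.smul_mem _ (D.brGK hx hy)) ?_
  rw [D.Ubil_symm]
  exact D.U_KG hy hx

theorem nom_skew (D : ExtSymData L) {a b c : L} (ha : a ∈ D.K ⊔ D.G1) (hb : b ∈ D.K ⊔ D.G1)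
    (hc : c ∈ D.K ⊔ D.G1) :
    D.gform (nomizu D a b) c + D.gform b (nomizu D a c) = 0 := by
  have h1 := D.Ubil_def a ha b hb c hc
  have h2 := D.Ubil_def a ha c hc b hb
  have h3 := D.g_symm hb (D.Ubil_mem a ha c hc)
  have h4 := D.g_symm hb (D.projm_mem ⁅a, c⁆)
  rw [← lie_skew c a, ← lie_skew c b] at h1
  rw [← lie_skew b a] at h2
  simp only [nomizu, map_add, map_smul, map_neg, LinearMap.add_apply, LinearMap.smul_apply,
    LinearMap.neg_apply, smul_eq_mul] at *
  linarith

theorem lie_skewK (D : ExtSymData L) {x y z : L} (hx : x ∈ D.K) (hy : y ∈ D.G1)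
    (hz : z ∈ D.G1) : D.gform ⁅x, y⁆ z + D.gform y ⁅x, z⁆ = 0 := by
  rw [D.gform_G1 _ (D.lieKG hx hy) _ hz, D.gform_G1 _ hy _ (D.lieKG hx hz)]
  have h : killingForm ℝ L ⁅y, x⁆ z = killingForm ℝ L y ⁅x, z⁆ :=
    LieModule.traceForm_apply_lie_apply ℝ L L y x z
  rw [← h, ← lie_skew y x, map_neg, LinearMap.neg_apply]
  ring

end ExtSymData

/-- For all `A, B, C ∈ 𝔪' = 𝔨 ⊕ i𝔤₁` (written as
`A = 1⊗x + i⊗y` with `x ∈ 𝔨`, `y ∈ 𝔤₁`, etc.), and any function `g'` on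
`𝔤^ℂ` satisfying `g'(x+iy, x'+iy') = g(x,x') + g(y,y')` on `𝔪'`:
`g'(Λ'(A)B, C) + g'(B, Λ'(A)C) = 0`, i.e. each `Λ'(A)` is `g'`-skew-symmetric. -/
theorem statement_9 [FiniteDimensional ℝ L] [LieAlgebra.IsSemisimple ℝ L]
    (D : ExtSymData L)
    (g' : (ℂ ⊗[ℝ] L) → (ℂ ⊗[ℝ] L) → ℝ)
    (hg' : ∀ x ∈ D.K, ∀ y ∈ D.G1, ∀ x' ∈ D.K, ∀ y' ∈ D.G1,
      g' (iota1 x + iotaI y) (iota1 x' + iotaI y')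
        = D.gform x x' + D.gform y y')
    (x : L) (hx : x ∈ D.K) (y : L) (hy : y ∈ D.G1)
    (x' : L) (hx' : x' ∈ D.K) (y' : L) (hy' : y' ∈ D.G1)
    (x'' : L) (hx'' : x'' ∈ D.K) (y'' : L) (hy'' : y'' ∈ D.G1) :
    g' (nomizuDual D x y x' y') (iota1 x'' + iotaI y'')
      + g' (iota1 x' + iotaI y') (nomizuDual D x y x'' y'') = 0 := by
  unfold nomizuDual
  rw [hg' _ (D.K.sub_mem (D.nomKK hx hx') (D.nomGG hy hy')) _
      (D.G1.sub_mem (D.G1.sub_mem (D.G1.smul_mem _ (D.lieKG hx hy')) (D.nomKG hx hy'))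
        (D.nomGK hy hx')) _ hx'' _ hy'',
    hg' _ hx' _ hy' _ (D.K.sub_mem (D.nomKK hx hx'') (D.nomGG hy hy'')) _
      (D.G1.sub_mem (D.G1.sub_mem (D.G1.smul_mem _ (D.lieKG hx hy'')) (D.nomKG hx hy''))
        (D.nomGK hy hx''))]
  have h1 := D.nom_skew (D.memK hx) (D.memK hx') (D.memK hx'')
  have h2 := D.nom_skew (D.memK hx) (D.memG hy') (D.memG hy'')
  have h3 := D.nom_skew (D.memG hy) (D.memG hy') (D.memK hx'')
  have h4 := D.nom_skew (D.memG hy) (D.memK hx') (D.memG hy'')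
  have h5 := D.lie_skewK hx hy' hy''
  simp only [map_sub, map_smul, LinearMap.sub_apply, LinearMap.smul_apply, smul_eq_mul]
  linarith
end
end

section
/- For all real numbers α, δ, every i ∈ {1,2,3} with {j,k} := {1,2,3} ∖ {i}, and every X ∈ ℝ^7, writing X^H := X − Σ_{p=1}^3 η_p(X)e_p: (α/2)γ(X)ψ_i + ((α−δ)/2) Σ_{p=1}^3 η_p(X)(Φ_p·ψ_i) = ((2α−δ)/2) η_i(X) γ(ξ_i)ψ_i + ((3δ−2α)/2)(η_j(X) γ(ξ_j)ψ_i + η_k(X) γ(ξ_k)ψ_i) + (α/2) γ(X^H)ψ_i. (This identity expresses that, on the auxiliary spinors in dimension 7, the right-hand side of the 𝓗-Killing equation coincides with the right-hand side of the generalized Killing equation satisfied by the auxiliary spinors of a 3-(α,δ)-Sasaki manifold.) -/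
noncomputable section

/- Context: the spin representation in dimension 7, realized on
`Σ = Λ^•(ℂ³)`, modelled as `Finset (Fin 3) → ℂ` (coefficients with respect to
the orthonormal basis of monomials `y_{i₁} ∧ ⋯ ∧ y_{i_k}`, `i₁ < ⋯ < i_k`).
`cOp j` is wedging with `y_j`, `aOp j` is its adjoint, and `γ` is the Clifford
multiplication of `ℝ⁷` determined by
`γ(e₁) = i` on even-degree and `-i` on odd-degree elements,
`γ(e_{2j}) = i(a_j + c_j)`, `γ(e_{2j+1}) = c_j - a_j`.
Indices of `e₁,…,e₇` (resp. `y₁,y₂,y₃`) are shifted to `Fin 7` (resp. `Fin 3`),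
so `e_s` is `estd (s-1)` and `y_j` corresponds to `j-1 : Fin 3`. -/

open Complex

/-- The spinor module `Σ = Λ^•(ℂ³)`, as coefficient functions on the monomial
basis indexed by subsets of `{1,2,3}`. -/
abbrev SpinorRep := Finset (Fin 3) → ℂ

/-- The sign `(-1)^{#{i ∈ S | i < j}}` arising when wedging `y_j` into the
monomial indexed by `S`. -/
def csign (j : Fin 3) (S : Finset (Fin 3)) : ℂ := (-1 : ℂ) ^ (S.filter (· < j)).card

/-- Creation operator `c_j`: wedge product with `y_j`. -/
def cOp (j : Fin 3) : SpinorRep →ₗ[ℂ] SpinorRep where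
  toFun ψ := fun S => if j ∈ S then csign j S * ψ (S.erase j) else 0
  map_add' ψ χ := by
    funext S
    by_cases h : j ∈ S <;> simp [h, mul_add]
  map_smul' c ψ := by
    funext S
    by_cases h : j ∈ S <;> simp [h] <;> ring

/-- Annihilation operator `a_j = c_j^*`: the adjoint of `c_j` with respect to
the Hermitian inner product making the monomials orthonormal. -/
def aOp (j : Fin 3) : SpinorRep →ₗ[ℂ] SpinorRep where
  toFun ψ := fun S => if j ∈ S then 0 else csign j S * ψ (insert j S)
  map_add' ψ χ := by
    funext S
    by_cases h : j ∈ S <;> simp [h, mul_add]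
  map_smul' c ψ := by
    funext S
    by_cases h : j ∈ S <;> simp [h] <;> ring

/-- `γ(e₁)`: multiplication by `i` on even-degree and by `-i` on odd-degree
elements. -/
def parityOp : SpinorRep →ₗ[ℂ] SpinorRep where
  toFun ψ := fun S => (if Even S.card then I else -I) * ψ S
  map_add' ψ χ := by funext S; simp [mul_add]
  map_smul' c ψ := by funext S; simp; ring

/-- Clifford multiplication by the standard basis vectors `e₁,…,e₇` of `ℝ⁷`. -/
def gammaBasis : Fin 7 → (SpinorRep →ₗ[ℂ] SpinorRep)
  | 0 => parityOp
  | 1 => I • (aOp 0 + cOp 0)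
  | 2 => cOp 0 - aOp 0
  | 3 => I • (aOp 1 + cOp 1)
  | 4 => cOp 1 - aOp 1
  | 5 => I • (aOp 2 + cOp 2)
  | 6 => cOp 2 - aOp 2

/-- Clifford multiplication `γ(v)` for `v ∈ ℝ⁷`. -/
def gamma (v : Fin 7 → ℝ) : SpinorRep →ₗ[ℂ] SpinorRep :=
  ∑ s : Fin 7, (v s : ℂ) • gammaBasis s

/-- The index in `Fin 7` of the Reeb direction `ξ_i = e_i`, `i = 1,2,3`. -/
def xiIdx (i : Fin 3) : Fin 7 := ⟨i.val, by omega⟩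

/-- The action of the fundamental 2-forms
`Φ₁ = -e^{23} - e^{45} - e^{67}`, `Φ₂ = e^{13} - e^{46} + e^{57}`,
`Φ₃ = -e^{12} - e^{47} - e^{56}` on spinors, via
`τ·ψ = Σ_{p<q} τ_{pq} γ(e_p)γ(e_q)ψ`. -/
def PhiOp : Fin 3 → (SpinorRep →ₗ[ℂ] SpinorRep)
  | 0 => -(gammaBasis 1 ∘ₗ gammaBasis 2) - gammaBasis 3 ∘ₗ gammaBasis 4
         - gammaBasis 5 ∘ₗ gammaBasis 6
  | 1 => gammaBasis 0 ∘ₗ gammaBasis 2 - gammaBasis 3 ∘ₗ gammaBasis 5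
         + gammaBasis 4 ∘ₗ gammaBasis 6
  | 2 => -(gammaBasis 0 ∘ₗ gammaBasis 1) - gammaBasis 3 ∘ₗ gammaBasis 6
         - gammaBasis 4 ∘ₗ gammaBasis 5

/-- The canonical spinor `ψ₀ = (y₂ ∧ y₃ + i y₁)/√2`. -/
def psi0 : SpinorRep := fun S =>
  if S = ({1, 2} : Finset (Fin 3)) then (Real.sqrt 2 : ℂ)⁻¹
  else if S = ({0} : Finset (Fin 3)) then I * (Real.sqrt 2 : ℂ)⁻¹
  else 0

/-- The auxiliary spinors `ψ_i = ξ_i · ψ₀`, `i = 1,2,3`. -/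
def psiAux (i : Fin 3) : SpinorRep := gammaBasis (xiIdx i) psi0

theorem cOp_apply' (j : Fin 3) (ψ : SpinorRep) (S : Finset (Fin 3)) :
    cOp j ψ S = if j ∈ S then csign j S * ψ (S.erase j) else 0 := rfl

theorem aOp_apply' (j : Fin 3) (ψ : SpinorRep) (S : Finset (Fin 3)) :
    aOp j ψ S = if j ∈ S then 0 else csign j S * ψ (insert j S) := rfl

theorem parityOp_apply' (ψ : SpinorRep) (S : Finset (Fin 3)) :
    parityOp ψ S = (if Even S.card then I else -I) * ψ S := rfl

theorem csign_eq (j : Fin 3) (S : Finset (Fin 3)) :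
    csign j S = if Even (S.filter (· < j)).card then 1 else -1 := by
  unfold csign
  split_ifs with h
  · exact h.neg_one_pow
  · exact (Nat.not_even_iff_odd.mp h).neg_one_pow

theorem finset_cases (S : Finset (Fin 3)) :
    S = ∅ ∨ S = {0} ∨ S = {1} ∨ S = {2} ∨ S = {0, 1} ∨ S = {0, 2} ∨ S = {1, 2} ∨
      S = {0, 1, 2} := by
  revert S; decide

set_option maxHeartbeats 4000000 in
theorem Phi_psiAux (p i : Fin 3) :
    PhiOp p (psiAux i) = (if p = i then (1 : ℂ) else -3) • gammaBasis (xiIdx p) (psiAux i) := by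
  funext S
  fin_cases p <;> fin_cases i <;>
    simp only [PhiOp, psiAux, xiIdx, gammaBasis, LinearMap.add_apply, LinearMap.sub_apply,
      LinearMap.neg_apply, LinearMap.smul_apply, LinearMap.comp_apply, Pi.add_apply,
      Pi.sub_apply, Pi.neg_apply, Pi.smul_apply, smul_eq_mul, cOp_apply', aOp_apply',
      parityOp_apply', csign_eq, psi0, Fin.zero_eta, Fin.mk_one, Fin.reduceFinMk] <;>
    rcases finset_cases S with rfl | rfl | rfl | rfl | rfl | rfl | rfl | rfl <;>
    simp (decide := true) only [if_true, if_false] <;>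
    ring_nf <;> (try simp only [Complex.I_sq, show I ^ 3 = -I by rw [pow_succ, I_sq]; ring, I_pow_four]) <;> (try ring1)

/-- For all `α, δ ∈ ℝ`, `i ∈ {1,2,3}` with
`{j,k} = {1,2,3} \ {i}`, and all `X ∈ ℝ⁷`, with
`X^H = X - Σ_{p=1}^3 η_p(X) e_p`:
`(α/2)γ(X)ψ_i + ((α-δ)/2) Σ_p η_p(X)(Φ_p·ψ_i)
  = ((2α-δ)/2) η_i(X) ξ_i·ψ_i
    + ((3δ-2α)/2)(η_j(X) ξ_j·ψ_i + η_k(X) ξ_k·ψ_i)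
    + (α/2) γ(X^H)ψ_i`. -/
theorem statement_15 (α δ : ℝ) (i j k : Fin 3)
    (hij : i ≠ j) (hik : i ≠ k) (hjk : j ≠ k) (X : Fin 7 → ℝ) :
    ((α / 2 : ℝ) : ℂ) • gamma X (psiAux i)
      + (((α - δ) / 2 : ℝ) : ℂ) •
          ∑ p : Fin 3, ((X (xiIdx p) : ℝ) : ℂ) • PhiOp p (psiAux i)
    = (((2 * α - δ) / 2 * X (xiIdx i) : ℝ) : ℂ) • gammaBasis (xiIdx i) (psiAux i)
      + (((3 * δ - 2 * α) / 2 : ℝ) : ℂ) •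
          (((X (xiIdx j) : ℝ) : ℂ) • gammaBasis (xiIdx j) (psiAux i)
            + ((X (xiIdx k) : ℝ) : ℂ) • gammaBasis (xiIdx k) (psiAux i))
      + ((α / 2 : ℝ) : ℂ) •
          gamma (X - ∑ p : Fin 3, X (xiIdx p) • (Pi.single (xiIdx p) (1 : ℝ) : Fin 7 → ℝ))
            (psiAux i) := by
  have hX : gamma (X - ∑ p : Fin 3, X (xiIdx p) • (Pi.single (xiIdx p) (1 : ℝ) : Fin 7 → ℝ))
      = gamma X - ∑ p : Fin 3, (X (xiIdx p) : ℂ) • gammaBasis (xiIdx p) := by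
    simp [gamma, Fin.sum_univ_succ, xiIdx, Pi.single_apply]
  rw [hX]
  simp only [Phi_psiAux, Fin.sum_univ_three, LinearMap.sub_apply, LinearMap.add_apply,
    LinearMap.smul_apply]
  generalize gamma X (psiAux i) = G
  push_cast
  fin_cases i <;> fin_cases j <;> fin_cases k <;> first
    | exact absurd rfl hij
    | exact absurd rfl hik
    | exact absurd rfl hjk
    | (simp (decide := true) only [if_true, if_false, Fin.zero_eta, Fin.mk_one, Fin.reduceFinMk]
       module)
end
end
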